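/- arXiv:2004.00083 — 2 statements merged into one kernel-verified Lean document; each statement's English description precedes it below -/
import Mathlib

section
/- Suppose φ = g − h is lower bounded, let γ > 0, 0 < λ < 2, and let the sequences be generated by u^k = prox_{γh}(s^k), v^k = prox_{γg}(s^k), s^{k+1} = s^k + λ(v^k − u^k) from any s^0 ∈ ℝ^p. Then Σ_{k=0}^∞ ‖u^k − v^k‖² < ∞, and consequently min_{i≤k} ‖u^i − v^i‖ = o(1/√k), i.e., (k+1)·min_{i≤k} ‖u^i − v^i‖² → 0 as k → ∞. -/
open scoped InnerProductSpace
noncomputable section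

/-- `ℝ^p` as a Euclidean space. -/
abbrev Euc (p : ℕ) := EuclideanSpace ℝ (Fin p)

variable {p : ℕ}

/-- `f : ℝ^p → ℝ ∪ {∞}` (modelled with `EReal` values never equal to `-∞`) is proper. -/
def ProperFun (f : Euc p → EReal) : Prop :=
  (∀ x, f x ≠ ⊥) ∧ (∃ x, f x ≠ ⊤)

/-- Convexity for extended-real-valued functions. -/
def ConvexFun (f : Euc p → EReal) : Prop :=
  ∀ x y : Euc p, ∀ t : ℝ, 0 ≤ t → t ≤ 1 →
    f (t • x + (1 - t) • y) ≤ (t : EReal) * f x + ((1 - t : ℝ) : EReal) * f y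

/-- The convex subdifferential `∂f(x)`. -/
def Subdiff (f : Euc p → EReal) (x : Euc p) : Set (Euc p) :=
  {v | ∀ z, f x + ((⟪v, z - x⟫_ℝ : ℝ) : EReal) ≤ f z}

/-- `u` minimizes `w ↦ f(w) + (1/(2γ))‖w − x‖²`. -/
def ProxObjMin (f : Euc p → EReal) (γ : ℝ) (x u : Euc p) : Prop :=
  ∀ w, f u + ((1/(2*γ) * ‖u - x‖^2 : ℝ) : EReal) ≤ f w + ((1/(2*γ) * ‖w - x‖^2 : ℝ) : EReal)

/-- `u = prox_{γf}(x)`: `u` is the unique minimizer of `w ↦ f(w) + (1/(2γ))‖w − x‖²`. -/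
def IsProxOf (f : Euc p → EReal) (γ : ℝ) (x u : Euc p) : Prop :=
  ProxObjMin f γ x u ∧ ∀ w, ProxObjMin f γ x w → w = u

/-- The Moreau envelope `f^γ(x) = inf_w { f(w) + (1/(2γ))‖w − x‖² }`, as an extended real. -/
def moreau (f : Euc p → EReal) (γ : ℝ) (x : Euc p) : EReal :=
  ⨅ w : Euc p, f w + ((1/(2*γ) * ‖w - x‖^2 : ℝ) : EReal)

/-- The (real-valued) Moreau envelope. -/
def moreauR (f : Euc p → EReal) (γ : ℝ) (x : Euc p) : ℝ := (moreau f γ x).toReal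

/-- The DC envelope `φ_γ = g^γ − h^γ`. -/
def dce (g h : Euc p → EReal) (γ : ℝ) (s : Euc p) : ℝ := moreauR g γ s - moreauR h γ s

/-- The DC function `φ = g − h`, with the convention `∞ − ∞ = ∞`. -/
def dcVal (g h : Euc p → EReal) (x : Euc p) : EReal :=
  if g x = ⊤ then ⊤ else g x - h x

lemma aux_real (A B C : ℝ) (h : ∀ t : ℝ, 0 < t → t ≤ 1 → 0 ≤ t * A + t * B + t^2 * C) :
    0 ≤ A + B := by
  by_contra hneg
  push Not at hneg
  set D := -(A + B) with hD
  have hDp : 0 < D := by linarith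
  have hC : 0 < |C| + D + 1 := by positivity
  set t := D / (|C| + D + 1) with ht
  have ht0 : 0 < t := div_pos hDp hC
  have ht1 : t ≤ 1 := by
    rw [ht, div_le_one hC]; linarith [abs_nonneg C]
  have h1 := h t ht0 ht1
  have h2 : t * (|C| + D + 1) = D := by rw [ht]; field_simp
  have h3 : 0 ≤ t * (A + B + t * C) := by linarith [h1, sq t, (by ring : t * (A + B + t * C) = t * A + t * B + t^2 * C)]
  have h4 : 0 ≤ A + B + t * C := by
    by_contra h5
    push Not at h5
    nlinarith
  have h5 : t * C ≤ t * |C| := mul_le_mul_of_nonneg_left (le_abs_self C) ht0.le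
  nlinarith

lemma prox_ne_top (f : Euc p → EReal) (hf : ProperFun f) (γ : ℝ) (x u : Euc p)
    (hu : ProxObjMin f γ x u) : f u ≠ ⊤ := by
  intro htop
  obtain ⟨w, hw⟩ := hf.2
  have h1 := hu w
  rw [htop, EReal.top_add_coe, top_le_iff] at h1
  have hw' := hf.1 w
  lift f w to ℝ using ⟨hw, hw'⟩ with a
  exact absurd h1 (by rw [← EReal.coe_add]; exact EReal.coe_ne_top _)

lemma prox_real (f : Euc p → EReal) (γ : ℝ) (x u : Euc p)
    (hu : ProxObjMin f γ x u) (a b : ℝ) (ha : f u = a) (w : Euc p) (hb : f w = b) :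
    a + 1/(2*γ) * ‖u - x‖^2 ≤ b + 1/(2*γ) * ‖w - x‖^2 := by
  have h1 := hu w
  rw [ha, hb] at h1
  exact_mod_cast h1

lemma prox_subgrad (f : Euc p → EReal) (hf : ProperFun f) (hc : ConvexFun f) (γ : ℝ)
    (hγ : 0 < γ) (x u : Euc p)
    (hu : ProxObjMin f γ x u) (a b : ℝ) (ha : f u = a) (w : Euc p) (hb : f w = b) :
    a + 1/γ * ⟪x - u, w - u⟫_ℝ ≤ b := by
  have key := aux_real (b - a) (1/γ * ⟪w - u, u - x⟫_ℝ) (1/(2*γ) * ‖w - u‖^2) ?_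
  · have : ⟪w - u, u - x⟫_ℝ = - ⟪x - u, w - u⟫_ℝ := by
      rw [real_inner_comm, ← neg_sub x u, inner_neg_left]
    rw [this] at key
    linarith
  intro t ht0 ht1
  have h1 := hc w u t ht0.le ht1
  have h2 := hu (t • w + (1 - t) • u)
  rw [ha, hb, ← EReal.coe_mul, ← EReal.coe_mul, ← EReal.coe_add] at h1
  have h3 := h2.trans (add_le_add_left h1 _)
  rw [ha, ← EReal.coe_add, ← EReal.coe_add, EReal.coe_le_coe_iff] at h3
  have e : t • w + (1 - t) • u - x = t • (w - u) + (u - x) := by module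
  rw [e, norm_add_sq_real, norm_smul, inner_smul_left, mul_pow, Real.norm_eq_abs, sq_abs] at h3
  simp only [conj_trivial] at h3
  have : t * (b - a) + t * (1 / γ * ⟪w - u, u - x⟫_ℝ) + t ^ 2 * (1 / (2 * γ) * ‖w - u‖ ^ 2)
    = (t * b + (1 - t) * a + 1 / (2 * γ) * (t ^ 2 * ‖w - u‖ ^ 2 + 2 * (t * ⟪w - u, u - x⟫_ℝ) + ‖u - x‖ ^ 2)) - (a + 1 / (2 * γ) * ‖u - x‖ ^ 2) := by
    field_simp; ring
  rw [this]; linarith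

lemma descent_alg (γ lam : ℝ) (hγ : 0 < γ) (s u v u' s' : Euc p)
    (hs : s' = s + lam • (v - u)) (gv g' hh hu' : ℝ)
    (h1 : g' ≤ gv + 1/(2*γ) * ‖v - s'‖^2)
    (h2 : hh + 1/γ * ⟪s - u, u' - u⟫_ℝ ≤ hu') :
    g' - (hu' + 1/(2*γ) * ‖u' - s'‖^2) ≤
      (gv + 1/(2*γ) * ‖v - s‖^2) - (hh + 1/(2*γ) * ‖u - s‖^2)
        - lam * (2 - lam) / (2*γ) * ‖u - v‖^2 := by
  set a := s - u with ha
  set d := v - u with hd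
  set b := s' - u' - a with hb
  have e1 : v - s' = (d - a) - lam • d := by rw [hs]; simp only [ha, hd]; module
  have e2 : v - s = d - a := by simp only [ha, hd]; module
  have e3 : u' - u = lam • d - b := by simp only [hb, hs, ha, hd]; module
  have e4 : ‖u' - s'‖ = ‖a + b‖ := by
    rw [norm_sub_rev]; congr 1; simp only [hb]; module
  have e5 : ‖u - s‖ = ‖a‖ := norm_sub_rev _ _
  have e6 : ‖u - v‖ = ‖d‖ := norm_sub_rev _ _
  rw [e1] at h1
  rw [e3] at h2
  rw [e2, e4, e5, e6]
  have n1 : ‖d - a - lam • d‖^2 = ‖d - a‖^2 - 2 * lam * (‖d‖^2 - ⟪a, d⟫_ℝ) + lam^2 * ‖d‖^2 := by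
    rw [norm_sub_sq_real, inner_smul_right, inner_sub_left, real_inner_self_eq_norm_sq, norm_smul,
      mul_pow, Real.norm_eq_abs, sq_abs]; ring
  have n2 : ⟪a, lam • d - b⟫_ℝ = lam * ⟪a, d⟫_ℝ - ⟪a, b⟫_ℝ := by
    rw [inner_sub_right, inner_smul_right]
  rw [n1] at h1
  rw [n2] at h2
  rw [norm_add_sq_real]
  have hb0 : 0 ≤ 1/(2*γ) * ‖b‖^2 := by positivity
  have : (gv + 1/(2*γ) * ‖d - a‖^2) - (hh + 1/(2*γ) * ‖a‖^2) - lam * (2 - lam) / (2*γ) * ‖d‖^2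
     = (gv + 1/(2*γ) * (‖d - a‖^2 - 2 * lam * (‖d‖^2 - ⟪a, d⟫_ℝ) + lam^2 * ‖d‖^2))
      - (hh + 1/γ * (lam * ⟪a, d⟫_ℝ - ⟪a, b⟫_ℝ) + 1/(2*γ) * (‖a‖^2 + 2 * ⟪a, b⟫_ℝ + ‖b‖^2)) + 1/(2*γ) * ‖b‖^2 := by
    field_simp; ring
  rw [this]
  linarith

open Filter in
lemma min_tendsto (a : ℕ → ℝ) (ha : ∀ k, 0 ≤ a k) (hsum : Summable a) :
    Tendsto (fun k : ℕ => ((k : ℝ) + 1) * ⨅ i : Fin (k+1), a i) atTop (nhds 0) := by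
  have hbd : ∀ k : ℕ, BddBelow (Set.range fun i : Fin (k+1) => a i) :=
    fun k => ⟨0, by rintro _ ⟨i, rfl⟩; exact ha _⟩
  set S : ℕ → ℝ := fun n => ∑ i ∈ Finset.range n, a i with hS
  have hSt : Tendsto S atTop (nhds (∑' i, a i)) := hsum.hasSum.tendsto_sum_nat
  have hdiv : Tendsto (fun k : ℕ => k / 2) atTop atTop := Nat.tendsto_div_const_atTop (by norm_num)
  have h1 : Tendsto (fun k : ℕ => 2 * (S (k+1) - S ((k+1)/2))) atTop (nhds 0) := by
    have := ((hSt.comp (tendsto_add_atTop_nat 1)).sub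
      (hSt.comp (hdiv.comp (tendsto_add_atTop_nat 1)))).const_mul 2
    simpa using this
  refine squeeze_zero (fun k => ?_) (fun k => ?_) h1
  · exact mul_nonneg (by positivity) (le_ciInf fun i => ha _)
  · set m := ⨅ i : Fin (k+1), a i with hm
    have hm0 : 0 ≤ m := le_ciInf fun i => ha _
    have hle : (k+1)/2 ≤ k+1 := Nat.div_le_self _ _
    have h2 : S (k+1) - S ((k+1)/2) = ∑ i ∈ Finset.Ico ((k+1)/2) (k+1), a i :=
      (Finset.sum_Ico_eq_sub a hle).symm
    have h3 : ∑ i ∈ Finset.Ico ((k+1)/2) (k+1), m ≤ ∑ i ∈ Finset.Ico ((k+1)/2) (k+1), a i := by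
      refine Finset.sum_le_sum fun i hi => ?_
      exact ciInf_le (hbd k) ⟨i, (Finset.mem_Ico.1 hi).2⟩
    rw [Finset.sum_const, Nat.card_Ico, nsmul_eq_mul] at h3
    have h4 : ((k : ℝ) + 1) ≤ 2 * ((k + 1 - (k+1)/2 : ℕ) : ℝ) := by
      have : k + 1 ≤ 2 * (k + 1 - (k+1)/2) := by omega
      exact_mod_cast this
    rw [h2]
    nlinarith

open Filter in
/-- with `φ = g − h` lower bounded, the iterates `u^k = prox_{γh}(s^k)`,
`v^k = prox_{γg}(s^k)`, `s^{k+1} = s^k + λ(v^k − u^k)` satisfy `Σ_k ‖u^k − v^k‖² < ∞` and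
`(k+1)·min_{i≤k}‖u^i − v^i‖² → 0`. -/
theorem statement13
    (g h : Euc p → EReal)
    (hg_proper : ProperFun g) (hg_convex : ConvexFun g) (hg_lsc : LowerSemicontinuous g)
    (hh_proper : ProperFun h) (hh_convex : ConvexFun h) (hh_lsc : LowerSemicontinuous h)
    (hlb : ∃ c : ℝ, ∀ x, (c : EReal) ≤ dcVal g h x)
    (γ : ℝ) (hγ : 0 < γ) (lam : ℝ) (hlam0 : 0 < lam) (hlam2 : lam < 2)
    (s u v : ℕ → Euc p)
    (hu : ∀ k, IsProxOf h γ (s k) (u k)) (hv : ∀ k, IsProxOf g γ (s k) (v k))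
    (hs : ∀ k, s (k+1) = s k + lam • (v k - u k)) :
    Summable (fun k => ‖u k - v k‖^2) ∧
      Tendsto (fun k : ℕ => ((k : ℝ) + 1) * ⨅ i : Fin (k+1), ‖u i - v i‖^2)
        atTop (nhds 0) := by
  obtain ⟨c, hc⟩ := hlb
  have hgt := fun k => prox_ne_top g hg_proper γ (s k) (v k) (hv k).1
  have hht := fun k => prox_ne_top h hh_proper γ (s k) (u k) (hu k).1
  have hG : ∀ k, g (v k) = ((g (v k)).toReal : EReal) := fun k =>
    (EReal.coe_toReal (hgt k) (hg_proper.1 _)).symm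
  have hH : ∀ k, h (u k) = ((h (u k)).toReal : EReal) := fun k =>
    (EReal.coe_toReal (hht k) (hh_proper.1 _)).symm
  set G : ℕ → ℝ := fun k => (g (v k)).toReal with hGdef
  set H : ℕ → ℝ := fun k => (h (u k)).toReal with hHdef
  set F : ℕ → ℝ := fun k => (G k + 1/(2*γ) * ‖v k - s k‖^2) - (H k + 1/(2*γ) * ‖u k - s k‖^2)
    with hF
  have hlow : ∀ k, c ≤ F k := by
    intro k
    have h1 := hc (v k)
    rw [dcVal, if_neg (hgt k)] at h1
    have hne : h (v k) ≠ ⊤ := by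
      intro ht
      rw [ht, EReal.sub_top, le_bot_iff] at h1
      exact EReal.coe_ne_bot _ h1
    have hHv := (EReal.coe_toReal hne (hh_proper.1 _)).symm
    have h2 := prox_real h γ (s k) (u k) (hu k).1 _ _ (hH k) (v k) hHv
    rw [hG k, hHv, ← EReal.coe_sub, EReal.coe_le_coe_iff] at h1
    simp only [hF, hGdef, hHdef] at *
    linarith
  set κ := lam * (2 - lam) / (2*γ) with hκ
  have hκ0 : 0 < κ := div_pos (mul_pos hlam0 (by linarith)) (by linarith)
  have hdesc : ∀ k, F (k+1) ≤ F k - κ * ‖u k - v k‖^2 := fun k =>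
    descent_alg γ lam hγ (s k) (u k) (v k) (u (k+1)) (s (k+1)) (hs k) (G k) _ (H k) (H (k+1))
      (prox_real g γ (s (k+1)) (v (k+1)) (hv (k+1)).1 _ _ (hG (k+1)) (v k) (hG k))
      (prox_subgrad h hh_proper hh_convex γ hγ (s k) (u k) (hu k).1 _ _ (hH k) (u (k+1)) (hH (k+1)))
  have hpart : ∀ n, κ * ∑ i ∈ Finset.range n, ‖u i - v i‖^2 ≤ F 0 - F n := by
    intro n
    induction n with
    | zero => simp
    | succ n ih =>
      rw [Finset.sum_range_succ, mul_add]
      linarith [hdesc n]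
  have hsum : Summable (fun k => ‖u k - v k‖^2) := by
    refine summable_of_sum_range_le (c := (F 0 - c) / κ) (fun k => by positivity) fun n => ?_
    rw [le_div_iff₀' hκ0]
    linarith [hpart n, hlow n]
  exact ⟨hsum, min_tendsto (fun k => ‖u k - v k‖^2) (fun k => by positivity) hsum⟩
end
end

section
/- Let f, g, h: ℝ^n → ℝ ∪ {∞} be proper, convex and lsc with φ = g − h − f lower bounded, let 0 < γ < 1 < δ, 0 < λ < 2(1 − γ), 0 < μ < 2(1 − δ^{-1}), and from any (s^0, t^0) generate u^k = prox_{(γδ/(δ−γ))h}((δs^k − γt^k)/(δ − γ)), v^k = prox_{γg}(s^k), z^k = prox_{δf}(t^k), s^{k+1} = s^k + λ(v^k − u^k), t^{k+1} = t^k + μ(u^k − z^k). Then min_{i≤k} ‖(u^i − v^i, u^i − z^i)‖ = o(1/√k); moreover (u^k), (v^k), (z^k) have the same set of cluster points Ω, and if (s^k, t^k) is bounded then every u⋆ ∈ Ω satisfies ∂g(u⋆) ∩ (∂f(u⋆) + ∂h(u⋆)) ≠ ∅ (hence ∂g(u⋆) ∩ ∂(f + h)(u⋆) ≠ ∅) and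 φ is constant on Ω. -/
open scoped InnerProductSpace
noncomputable section

variable {p : ℕ}

/-- The DC function `φ = g − h − f`, with the convention `∞ − ∞ = ∞`. -/
def dc3Val (g h f : Euc p → EReal) (x : Euc p) : EReal :=
  if g x = ⊤ then ⊤ else g x - h x - f x

/-- Real-valued form of the subgradient inequality at a point of the domain. -/
def RSub (f : Euc p → EReal) (x ξ : Euc p) : Prop :=
  f x ≠ ⊤ ∧ ∀ y, f y ≠ ⊤ → (f x).toReal + ⟪ξ, y - x⟫_ℝ ≤ (f y).toReal

lemma le_of_small {X Y C : ℝ} (h : ∀ τ : ℝ, 0 < τ → τ ≤ 1 → X ≤ Y + τ * C) : X ≤ Y := by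
  have h1 : Filter.Tendsto (fun τ : ℝ => Y + τ * C) (nhdsWithin 0 (Set.Ioi 0)) (nhds (Y + 0 * C)) := by
    apply Filter.Tendsto.mono_left _ nhdsWithin_le_nhds
    exact Continuous.tendsto (by fun_prop) 0
  have h2 : ∀ᶠ τ : ℝ in nhdsWithin 0 (Set.Ioi 0), X ≤ Y + τ * C := by
    have : Set.Ioc (0:ℝ) 1 ∈ nhdsWithin (0:ℝ) (Set.Ioi 0) := Ioc_mem_nhdsGT one_pos
    filter_upwards [this] with τ hτ using h τ hτ.1 hτ.2
  have := ge_of_tendsto h1 h2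
  linarith

lemma prox_rsub {f : Euc p → EReal} (hf : ProperFun f) (hc : ConvexFun f) {γ : ℝ}
    {x u : Euc p} (h : ProxObjMin f γ x u) : RSub f u (γ⁻¹ • (x - u)) := by
  obtain ⟨hb, w0, hw0⟩ := hf
  have hu : f u ≠ ⊤ := by
    intro hu
    have := h w0
    rw [hu] at this
    lift f w0 to ℝ using ⟨hw0, hb w0⟩ with a
    rw [EReal.top_add_coe, ← EReal.coe_add] at this
    exact absurd (top_le_iff.1 this) (EReal.coe_ne_top _)
  refine ⟨hu, fun y hy => ?_⟩
  apply le_of_small (C := 1/(2*γ) * ‖y - u‖^2)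
  intro τ hτ hτ1
  have h1 := hc y u τ hτ.le hτ1
  have h2 := h (τ • y + (1 - τ) • u)
  have h3 : f u + ((1/(2*γ) * ‖u - x‖^2 : ℝ) : EReal) ≤
     (τ : EReal) * f y + ((1 - τ : ℝ) : EReal) * f u
       + ((1/(2*γ) * ‖(τ • y + (1 - τ) • u) - x‖^2 : ℝ) : EReal) :=
    h2.trans (by gcongr)
  generalize hfu : f u = fu at *
  generalize hfy : f y = fy at *
  have hbu := hb u
  have hby := hb y
  rw [hfu] at hbu
  rw [hfy] at hby
  lift fu to ℝ using ⟨hu, hbu⟩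
  lift fy to ℝ using ⟨hy, hby⟩
  simp only [EReal.toReal_coe]
  have h4 : fu + 1/(2*γ) * ‖u - x‖^2 ≤ τ * fy + (1 - τ) * fu
     + 1/(2*γ) * ‖(τ • y + (1 - τ) • u) - x‖^2 := by exact_mod_cast h3
  have h5 : (τ • y + (1 - τ) • u) - x = (u - x) + τ • (y - u) := by module
  rw [h5, norm_add_sq_real, norm_smul, mul_pow, Real.norm_eq_abs, sq_abs, real_inner_smul_right] at h4
  have h6 : ⟪γ⁻¹ • (x - u), y - u⟫_ℝ = - (γ⁻¹ * ⟪u - x, y - u⟫_ℝ) := by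
    rw [real_inner_smul_left, ← neg_sub u x, inner_neg_left]; ring
  rw [h6]
  have h7 : τ * (fu + -(γ⁻¹ * ⟪u - x, y - u⟫_ℝ)) ≤ τ * (fy + τ * (1 / (2 * γ) * ‖y - u‖ ^ 2)) := by
    have e : 1/(2*γ) = γ⁻¹/2 := by rw [one_div, mul_inv]; ring
    rw [e] at h4 ⊢
    nlinarith
  exact le_of_mul_le_mul_left h7 hτ

lemma RSub.subdiff {f : Euc p → EReal} (hf : ProperFun f) {x ξ : Euc p} (h : RSub f x ξ) :
    ξ ∈ Subdiff f x := by
  intro y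
  by_cases hy : f y = ⊤
  · rw [hy]; exact le_top
  have := h.2 y hy
  rw [← EReal.coe_toReal h.1 (hf.1 x), ← EReal.coe_toReal hy (hf.1 y)]
  exact_mod_cast this

open Filter in
lemma rsub_closed {f : Euc p → EReal} (hf : ProperFun f) (hl : LowerSemicontinuous f)
    {x ξ : ℕ → Euc p} {X Ξ : Euc p} (h : ∀ k, RSub f (x k) (ξ k))
    (hx : Tendsto x atTop (nhds X)) (hξ : Tendsto ξ atTop (nhds Ξ)) :
    RSub f X Ξ ∧ Tendsto (fun k => (f (x k)).toReal) atTop (nhds (f X).toReal) := by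
  have up : ∀ w, Tendsto (fun k => (f w).toReal - ⟪ξ k, w - x k⟫_ℝ) atTop
      (nhds ((f w).toReal - ⟪Ξ, w - X⟫_ℝ)) := fun w =>
    tendsto_const_nhds.sub (hξ.inner (tendsto_const_nhds.sub hx))
  have low : ∀ r : ℝ, (r : EReal) < f X → ∀ᶠ k in atTop, r < (f (x k)).toReal := by
    intro r hr
    filter_upwards [hx.eventually (hl X r hr)] with k hk
    rw [← EReal.coe_toReal (h k).1 (hf.1 _)] at hk
    exact_mod_cast hk
  have hfin : f X ≠ ⊤ := by
    intro hT
    obtain ⟨w, hw⟩ := hf.2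
    have h1 := low ((f w).toReal - ⟪Ξ, w - X⟫_ℝ + 1) (by rw [hT]; exact EReal.coe_lt_top _)
    have h2 := (up w).eventually (gt_mem_nhds (lt_add_one _))
    obtain ⟨k, h1, h2⟩ := (h1.and h2).exists
    have := (h k).2 w hw
    linarith
  have low' : ∀ r : ℝ, r < (f X).toReal → ∀ᶠ k in atTop, r < (f (x k)).toReal := by
    intro r hr
    apply low
    rw [← EReal.coe_toReal hfin (hf.1 _)]
    exact_mod_cast hr
  refine ⟨⟨hfin, fun y hy => ?_⟩, ?_⟩
  · have : (f X).toReal ≤ (f y).toReal - ⟪Ξ, y - X⟫_ℝ := by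
      apply le_of_forall_lt
      intro r hr
      obtain ⟨r', h1, h2⟩ := exists_between hr
      refine h1.trans_le (ge_of_tendsto (up y) ?_)
      filter_upwards [low' r' h2] with k hk
      have := (h k).2 y hy
      linarith
    linarith
  · rw [tendsto_order]
    refine ⟨fun r hr => low' r hr, fun r hr => ?_⟩
    have := up X
    simp only [sub_self, inner_zero_right, sub_zero] at this
    filter_upwards [this.eventually (gt_mem_nhds hr)] with k hk
    have := (h k).2 X hfin
    linarith

open Filter in
lemma min_little_o {a : ℕ → ℝ} (h0 : ∀ k, 0 ≤ a k) (hs : Summable a) :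
    Tendsto (fun k : ℕ => ((k : ℝ) + 1) * ⨅ i : Fin (k+1), a i) atTop (nhds 0) := by
  have hS := hs.hasSum.tendsto_sum_nat
  have h1 := hS.comp (tendsto_add_atTop_nat 1)
  have h2 := hS.comp (Nat.tendsto_div_const_atTop (n := 2) (by norm_num))
  have h3 := (h1.sub h2).const_mul 2
  rw [sub_self, mul_zero] at h3
  refine squeeze_zero (fun k => ?_) (fun k => ?_) h3
  · exact mul_nonneg (by positivity) (Real.iInf_nonneg fun i => h0 _)
  · simp only [Function.comp]
    set m := ⨅ i : Fin (k+1), a i with hm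
    have hm0 : 0 ≤ m := Real.iInf_nonneg fun i => h0 _
    have hle : k / 2 ≤ k + 1 := by omega
    rw [← Finset.sum_Ico_eq_sub _ hle]
    have h4 : (Finset.Ico (k/2) (k+1)).card • m ≤ ∑ i ∈ Finset.Ico (k/2) (k+1), a i := by
      apply Finset.card_nsmul_le_sum
      intro i hi
      exact ciInf_le (Set.finite_range _).bddBelow (⟨i, (Finset.mem_Ico.1 hi).2⟩ : Fin (k+1))
    rw [Nat.card_Ico, nsmul_eq_mul, Nat.cast_sub hle] at h4
    have h5 : ((k/2 : ℕ) : ℝ) ≤ k / 2 := Nat.cast_div_le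
    push_cast at h4
    nlinarith

open Filter in
lemma cluster_imp {u v : ℕ → Euc p} (h : Tendsto (fun k => v k - u k) atTop (nhds 0)) (x : Euc p)
    (hx : MapClusterPt x atTop u) : MapClusterPt x atTop v := by
  obtain ⟨ψ, hψ, hc⟩ := hx.tendsto_subseq
  have h1 := hc.add (h.comp hψ.tendsto_atTop)
  apply MapClusterPt.of_comp hψ.tendsto_atTop
  apply Filter.Tendsto.mapClusterPt
  rw [add_zero] at h1
  refine h1.congr fun k => ?_
  simp

lemma descent_ineq (A B θ κ lam mu : ℝ) (hA : 1 < A) (hB : B < 1) (hB0 : 0 < B)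
    (hθ : lam * A = θ * (A - 1)) (hκ : mu = κ * (1 - B))
    (s t u v z s' t' u' v' z' : Euc p) (gv hu fz gv' hu' fz' : ℝ)
    (hs : s' = s + lam • (v - u)) (ht : t' = t + mu • (u - z))
    (h1 : gv' + ⟪A • (s' - v'), v - v'⟫_ℝ ≤ gv)
    (h2 : hu + ⟪A • (s - u) - B • (t - u), u' - u⟫_ℝ ≤ hu')
    (h3 : fz + ⟪B • (t - z), z' - z⟫_ℝ ≤ fz') :
    (gv' + A/2 * ‖v' - s'‖^2 - (hu' + A/2 * ‖u' - s'‖^2 - B/2 * ‖u' - t'‖^2)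
      - (fz' + B/2 * ‖z' - t'‖^2)) + (θ*(A-1)/2*(2-θ)) * ‖u - v‖^2
        + (κ*(1-B)*B/2*(2-κ)) * ‖u - z‖^2 ≤
    (gv + A/2 * ‖v - s‖^2 - (hu + A/2 * ‖u - s‖^2 - B/2 * ‖u - t‖^2)
      - (fz + B/2 * ‖z - t‖^2)) := by
  have e1 : 0 ≤ A/2 * ‖v - v'‖^2 := by positivity
  have e2 : 0 ≤ (A-1)/2 * ‖(u'-u) - θ • (v - u)‖^2 :=
    mul_nonneg (by linarith) (by positivity)
  have e3 : 0 ≤ (1-B)/2 * ‖(u'-u) + (κ*B) • (u - z)‖^2 :=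
    mul_nonneg (by linarith) (by positivity)
  have e4 : 0 ≤ B/2 * ‖(z'-z) - mu • (u - z)‖^2 := by positivity
  obtain ⟨c, hc⟩ : ∃ c, c = lam * A := ⟨_, rfl⟩
  have hlam : lam = θ * (A-1) / A := by field_simp; linarith
  subst hs ht hκ
  rw [hlam] at *
  suffices H : (gv - (gv' + ⟪A • ((s + (θ * (A-1) / A) • (v - u)) - v'), v - v'⟫_ℝ)) +
      (hu' - (hu + ⟪A • (s - u) - B • (t - u), u' - u⟫_ℝ)) +
      (fz' - (fz + ⟪B • (t - z), z' - z⟫_ℝ)) + A/2 * ‖v - v'‖^2 +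
      (A-1)/2 * ‖(u'-u) - θ • (v - u)‖^2 + (1-B)/2 * ‖(u'-u) + (κ*B) • (u - z)‖^2
      + B/2 * ‖(z'-z) - (κ * (1-B)) • (u - z)‖^2 =
      (gv + A/2 * ‖v - s‖^2 - (hu + A/2 * ‖u - s‖^2 - B/2 * ‖u - t‖^2)
      - (fz + B/2 * ‖z - t‖^2)) -
      ((gv' + A/2 * ‖v' - (s + (θ * (A-1) / A) • (v - u))‖^2 - (hu' + A/2 * ‖u' - (s + (θ * (A-1) / A) • (v - u))‖^2 - B/2 * ‖u' - (t + (κ * (1-B)) • (u - z))‖^2)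
      - (fz' + B/2 * ‖z' - (t + (κ * (1-B)) • (u - z))‖^2)) + (θ*(A-1)/2*(2-θ)) * ‖u - v‖^2
        + (κ*(1-B)*B/2*(2-κ)) * ‖u - z‖^2) by linarith
  have hA0 : A ≠ 0 := by linarith
  simp only [← real_inner_self_eq_norm_sq, inner_sub_left, inner_sub_right, inner_add_left,
    inner_add_right, real_inner_smul_left, real_inner_smul_right]
  simp only [real_inner_comm]
  field_simp
  ring

lemma lower_ineq (A B : ℝ) (hAB : B < A) (hB0 : 0 < B)
    (s t u v z : Euc p) (gv hu fz hv fv : ℝ)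
    (h2 : hu + ⟪A • (s - u) - B • (t - u), v - u⟫_ℝ ≤ hv)
    (h3 : fz + ⟪B • (t - z), v - z⟫_ℝ ≤ fv) :
    gv - hv - fv ≤
    (gv + A/2 * ‖v - s‖^2 - (hu + A/2 * ‖u - s‖^2 - B/2 * ‖u - t‖^2)
      - (fz + B/2 * ‖z - t‖^2)) := by
  have e1 : 0 ≤ (A - B)/2 * ‖v - u‖^2 := mul_nonneg (by linarith) (by positivity)
  have e4 : 0 ≤ B/2 * ‖v - z‖^2 := by positivity
  suffices H : 
      (hv - (hu + ⟪A • (s - u) - B • (t - u), v - u⟫_ℝ)) +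
      (fv - (fz + ⟪B • (t - z), v - z⟫_ℝ)) + (A - B)/2 * ‖v - u‖^2 + B/2 * ‖v - z‖^2 =
    (gv + A/2 * ‖v - s‖^2 - (hu + A/2 * ‖u - s‖^2 - B/2 * ‖u - t‖^2)
      - (fz + B/2 * ‖z - t‖^2)) - (gv - hv - fv) by linarith
  simp only [← real_inner_self_eq_norm_sq, inner_sub_left, inner_sub_right, inner_add_left,
    inner_add_right, real_inner_smul_left, real_inner_smul_right]
  simp only [real_inner_comm]
  ring

lemma dc_dom {f g h : Euc p → EReal} (hf : ProperFun f) (hg : ProperFun g) (hh : ProperFun h)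
    {c : ℝ} (hc : ∀ x, (c : EReal) ≤ dc3Val g h f x) {x : Euc p} (hx : g x ≠ ⊤) :
    h x ≠ ⊤ ∧ f x ≠ ⊤ ∧
    dc3Val g h f x = (((g x).toReal - (h x).toReal - (f x).toReal : ℝ) : EReal) := by
  have h1 := hc x
  unfold dc3Val at h1 ⊢
  rw [if_neg hx] at h1 ⊢
  have a : h x ≠ ⊤ := by
    intro h2
    rw [h2, EReal.sub_top, EReal.bot_sub] at h1
    exact absurd (le_bot_iff.1 h1) (EReal.coe_ne_bot _)
  have b : f x ≠ ⊤ := by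
    intro h2
    rw [h2, EReal.sub_top] at h1
    exact absurd (le_bot_iff.1 h1) (EReal.coe_ne_bot _)
  refine ⟨a, b, ?_⟩
  rw [EReal.coe_sub, EReal.coe_sub, EReal.coe_toReal hx (hg.1 x), EReal.coe_toReal a (hh.1 x),
    EReal.coe_toReal b (hf.1 x)]

lemma sum_subdiff {f h : Euc p → EReal} (hf : ProperFun f) (hh : ProperFun h) {x a b : Euc p}
    (h1 : RSub f x a) (h2 : RSub h x b) : a + b ∈ Subdiff (fun x => f x + h x) x := by
  intro y
  have i1 := h1.subdiff hf y
  have i2 := h2.subdiff hh y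
  refine le_trans (le_of_eq ?_) (add_le_add i1 i2)
  simp only [inner_add_left, EReal.coe_add]
  abel

open Filter Pointwise in
/-- convergence of the three-prox algorithm for `φ = g − h − f`. -/
theorem statement19
    (f g h : Euc p → EReal)
    (hf_proper : ProperFun f) (hf_convex : ConvexFun f) (hf_lsc : LowerSemicontinuous f)
    (hg_proper : ProperFun g) (hg_convex : ConvexFun g) (hg_lsc : LowerSemicontinuous g)
    (hh_proper : ProperFun h) (hh_convex : ConvexFun h) (hh_lsc : LowerSemicontinuous h)
    (hlb : ∃ c : ℝ, ∀ x, (c : EReal) ≤ dc3Val g h f x)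
    (γ δ : ℝ) (hγ : 0 < γ) (hγ1 : γ < 1) (hδ : 1 < δ)
    (lam mu : ℝ) (hlam0 : 0 < lam) (hlam2 : lam < 2 * (1 - γ))
    (hmu0 : 0 < mu) (hmu2 : mu < 2 * (1 - δ⁻¹))
    (s t u v z : ℕ → Euc p)
    (hu : ∀ k, IsProxOf h (γ*δ/(δ-γ)) ((δ - γ)⁻¹ • (δ • s k - γ • t k)) (u k))
    (hv : ∀ k, IsProxOf g γ (s k) (v k))
    (hz : ∀ k, IsProxOf f δ (t k) (z k))
    (hs : ∀ k, s (k+1) = s k + lam • (v k - u k))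
    (ht : ∀ k, t (k+1) = t k + mu • (u k - z k)) :
    Tendsto (fun k : ℕ =>
        ((k : ℝ) + 1) * ⨅ i : Fin (k+1), (‖u i - v i‖^2 + ‖u i - z i‖^2))
      atTop (nhds 0) ∧
    {x : Euc p | MapClusterPt x atTop u} = {x : Euc p | MapClusterPt x atTop v} ∧
    {x : Euc p | MapClusterPt x atTop u} = {x : Euc p | MapClusterPt x atTop z} ∧
    (Bornology.IsBounded (Set.range s) → Bornology.IsBounded (Set.range t) →
      (∀ ustar : Euc p, MapClusterPt ustar atTop u →
        (Subdiff g ustar ∩ (Subdiff f ustar + Subdiff h ustar)).Nonempty ∧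
          (Subdiff g ustar ∩ Subdiff (fun x => f x + h x) ustar).Nonempty) ∧
      (∀ x y : Euc p, MapClusterPt x atTop u → MapClusterPt y atTop u →
        dc3Val g h f x = dc3Val g h f y)) := by
  obtain ⟨c, hc⟩ := hlb
  have hδ0 : 0 < δ := by linarith
  have hB0 : 0 < δ⁻¹ := by positivity
  have hB1 : δ⁻¹ < 1 := inv_lt_one_of_one_lt₀ hδ
  have hA1 : 1 < γ⁻¹ := (one_lt_inv₀ hγ).2 hγ1
  have Rg : ∀ k, RSub g (v k) (γ⁻¹ • (s k - v k)) := fun k => prox_rsub hg_proper hg_convex (hv k).1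
  have Rf : ∀ k, RSub f (z k) (δ⁻¹ • (t k - z k)) := fun k => prox_rsub hf_proper hf_convex (hz k).1
  have Rh : ∀ k, RSub h (u k) (γ⁻¹ • (s k - u k) - δ⁻¹ • (t k - u k)) := fun k => by
    have := prox_rsub hh_proper hh_convex (hu k).1
    convert this using 1
    have hd : δ - γ ≠ 0 := by linarith
    ext i
    simp
    field_simp
    ring
  obtain ⟨E, hE⟩ : ∃ E : ℕ → ℝ, ∀ k, E k = ((g (v k)).toReal + γ⁻¹/2 * ‖v k - s k‖^2
      - ((h (u k)).toReal + γ⁻¹/2 * ‖u k - s k‖^2 - δ⁻¹/2 * ‖u k - t k‖^2)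
      - ((f (z k)).toReal + δ⁻¹/2 * ‖z k - t k‖^2)) := ⟨_, fun _ => rfl⟩
  obtain ⟨θ, hθ⟩ : ∃ θ, θ = lam * γ⁻¹ / (γ⁻¹ - 1) := ⟨_, rfl⟩
  obtain ⟨κ, hκ⟩ : ∃ κ, κ = mu / (1 - δ⁻¹) := ⟨_, rfl⟩
  have hA1' : 0 < γ⁻¹ - 1 := by linarith
  have hB1' : 0 < 1 - δ⁻¹ := by linarith
  have hθ0 : 0 < θ := by rw [hθ]; positivity
  have hκ0 : 0 < κ := by rw [hκ]; positivity
  have hθ2 : θ < 2 := by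
    rw [hθ, div_lt_iff₀ hA1']
    have : lam * γ⁻¹ < 2 * (1 - γ) * γ⁻¹ := by gcongr
    have e : γ * γ⁻¹ = 1 := mul_inv_cancel₀ hγ.ne'
    linarith
  have hκ2 : κ < 2 := by rw [hκ, div_lt_iff₀ hB1']; exact hmu2
  have hθ' : lam * γ⁻¹ = θ * (γ⁻¹ - 1) := by rw [hθ, div_mul_cancel₀ _ hA1'.ne']
  have hκ' : mu = κ * (1 - δ⁻¹) := by rw [hκ, div_mul_cancel₀ _ hB1'.ne']
  obtain ⟨c1, hc1⟩ : ∃ c1, c1 = θ*(γ⁻¹-1)/2*(2-θ) := ⟨_, rfl⟩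
  obtain ⟨c2, hc2⟩ : ∃ c2, c2 = κ*(1-δ⁻¹)*δ⁻¹/2*(2-κ) := ⟨_, rfl⟩
  have hc1p : 0 < c1 := by rw [hc1]; exact mul_pos (by positivity) (by linarith)
  have hc2p : 0 < c2 := by rw [hc2]; exact mul_pos (by positivity) (by linarith)
  have desc : ∀ k, E (k+1) + c1 * ‖u k - v k‖^2 + c2 * ‖u k - z k‖^2 ≤ E k := by
    intro k
    rw [hE, hE, hc1, hc2]
    exact descent_ineq γ⁻¹ δ⁻¹ θ κ lam mu hA1 hB1 hB0 hθ' hκ' _ _ _ _ _ _ _ _ _ _ _ _ _ _ _ _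
      (hs k) (ht k) ((Rg (k+1)).2 _ (Rg k).1) ((Rh k).2 _ (Rh (k+1)).1) ((Rf k).2 _ (Rf (k+1)).1)
  have low : ∀ k, c ≤ E k := by
    intro k
    obtain ⟨d1, d2, d3⟩ := dc_dom hf_proper hg_proper hh_proper hc (Rg k).1
    have h1 := hc (v k)
    rw [d3, EReal.coe_le_coe_iff] at h1
    rw [hE]
    exact h1.trans (lower_ineq γ⁻¹ δ⁻¹ (by linarith) hB0 _ _ _ _ _ _ _ _ _ _
      ((Rh k).2 _ d1) ((Rf k).2 _ d2))
  obtain ⟨a, ha⟩ : ∃ a : ℕ → ℝ, ∀ k, a k = ‖u k - v k‖^2 + ‖u k - z k‖^2 := ⟨_, fun _ => rfl⟩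
  have ha0 : ∀ k, 0 ≤ a k := fun k => by rw [ha]; positivity
  obtain ⟨m, hm⟩ : ∃ m, m = min c1 c2 := ⟨_, rfl⟩
  have hm0 : 0 < m := by rw [hm]; exact lt_min hc1p hc2p
  have desc' : ∀ k, E (k+1) + m * a k ≤ E k := by
    intro k
    have h1 : m ≤ c1 := by rw [hm]; exact min_le_left _ _
    have h2 : m ≤ c2 := by rw [hm]; exact min_le_right _ _
    have := desc k
    have h3 := mul_le_mul_of_nonneg_right h1 (sq_nonneg ‖u k - v k‖)
    have h4 := mul_le_mul_of_nonneg_right h2 (sq_nonneg ‖u k - z k‖)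
    rw [ha]
    linarith
  have hsum : Summable a := by
    refine summable_of_sum_range_le (c := (E 0 - c) / m) ha0 fun n => ?_
    rw [le_div_iff₀ hm0]
    have : ∀ n, (∑ i ∈ Finset.range n, a i) * m ≤ E 0 - E n := by
      intro n
      induction n with
      | zero => simp
      | succ n ih =>
        rw [Finset.sum_range_succ]
        have := desc' n
        linarith
    have h1 := this n
    have h2 := low n
    linarith
  have anti : Antitone E := antitone_nat_of_succ_le fun k => by
    have := desc' k
    have := mul_nonneg hm0.le (ha0 k)
    linarith
  obtain ⟨L, hL⟩ : ∃ L, Tendsto E atTop (nhds L) :=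
    ⟨_, tendsto_atTop_ciInf anti ⟨c, by rintro _ ⟨k, rfl⟩; exact low k⟩⟩
  have ha_lim := hsum.tendsto_atTop_zero
  have key : ∀ w : ℕ → Euc p, (∀ k, ‖u k - w k‖^2 ≤ a k) →
      Tendsto (fun k => u k - w k) atTop (nhds 0) := by
    intro w hw
    have h1 := squeeze_zero (fun k => sq_nonneg _) hw ha_lim
    have h2 := h1.sqrt
    simp only [Real.sqrt_sq (norm_nonneg _), Real.sqrt_zero] at h2
    exact tendsto_zero_iff_norm_tendsto_zero.2 h2
  have huv : Tendsto (fun k => u k - v k) atTop (nhds 0) :=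
    key v fun k => by rw [ha]; linarith [sq_nonneg ‖u k - z k‖]
  have huz : Tendsto (fun k => u k - z k) atTop (nhds 0) :=
    key z fun k => by rw [ha]; linarith [sq_nonneg ‖u k - v k‖]
  have hvu : Tendsto (fun k => v k - u k) atTop (nhds 0) := by
    simpa using huv.neg
  have hzu : Tendsto (fun k => z k - u k) atTop (nhds 0) := by
    simpa using huz.neg
  refine ⟨?_, ?_, ?_, ?_⟩
  · have := min_little_o ha0 hsum
    simpa only [ha] using this
  · ext x; exact ⟨cluster_imp hvu x, cluster_imp huv x⟩
  · ext x; exact ⟨cluster_imp hzu x, cluster_imp huz x⟩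
  intro bs bt
  have main : ∀ x : Euc p, MapClusterPt x atTop u → ∃ S T : Euc p,
      RSub g x (γ⁻¹ • (S - x)) ∧ RSub f x (δ⁻¹ • (T - x)) ∧
      RSub h x (γ⁻¹ • (S - x) - δ⁻¹ • (T - x)) ∧
      L = (g x).toReal - (h x).toReal - (f x).toReal := by
    intro x hx
    obtain ⟨ψ1, hψ1, hu1⟩ := hx.tendsto_subseq
    obtain ⟨S, -, ψ2, hψ2, hs2⟩ := tendsto_subseq_of_bounded bs (x := s ∘ ψ1) (fun n => ⟨_, rfl⟩)
    obtain ⟨T, -, ψ3, hψ3, ht3⟩ := tendsto_subseq_of_bounded bt (x := t ∘ ψ1 ∘ ψ2)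
      (fun n => ⟨_, rfl⟩)
    obtain ⟨ψ, hψ⟩ : ∃ ψ : ℕ → ℕ, ψ = fun n => ψ1 (ψ2 (ψ3 n)) := ⟨_, rfl⟩
    have hψt : Tendsto ψ atTop atTop := by
      rw [hψ]
      exact hψ1.tendsto_atTop.comp (hψ2.tendsto_atTop.comp hψ3.tendsto_atTop)
    have us : Tendsto (fun n => u (ψ n)) atTop (nhds x) := by
      rw [hψ]
      exact hu1.comp (hψ2.tendsto_atTop.comp hψ3.tendsto_atTop)
    have ss : Tendsto (fun n => s (ψ n)) atTop (nhds S) := by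
      rw [hψ]
      exact hs2.comp hψ3.tendsto_atTop
    have ts : Tendsto (fun n => t (ψ n)) atTop (nhds T) := by
      rw [hψ]
      exact ht3
    have vs : Tendsto (fun n => v (ψ n)) atTop (nhds x) := by
      have := us.add (hvu.comp hψt)
      simpa [Function.comp_def] using this
    have zs : Tendsto (fun n => z (ψ n)) atTop (nhds x) := by
      have := us.add (hzu.comp hψt)
      simpa [Function.comp_def] using this
    obtain ⟨g1, g2⟩ := rsub_closed hg_proper hg_lsc (fun n => Rg (ψ n)) vs
      ((ss.sub vs).const_smul γ⁻¹)
    obtain ⟨f1, f2⟩ := rsub_closed hf_proper hf_lsc (fun n => Rf (ψ n)) zs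
      ((ts.sub zs).const_smul δ⁻¹)
    obtain ⟨h1, h2⟩ := rsub_closed hh_proper hh_lsc (fun n => Rh (ψ n)) us
      (((ss.sub us).const_smul γ⁻¹).sub ((ts.sub us).const_smul δ⁻¹))
    refine ⟨S, T, g1, f1, h1, ?_⟩
    have lim := ((g2.add (((vs.sub ss).norm.pow 2).const_mul (γ⁻¹/2))).sub
      ((h2.add (((us.sub ss).norm.pow 2).const_mul (γ⁻¹/2))).sub
        (((us.sub ts).norm.pow 2).const_mul (δ⁻¹/2)))).sub
      (f2.add (((zs.sub ts).norm.pow 2).const_mul (δ⁻¹/2)))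
    have lim2 := hL.comp hψt
    have := tendsto_nhds_unique (lim2.congr fun n => hE (ψ n)) lim
    rw [this]
    ring
  refine ⟨fun x hx => ?_, fun x y hx hy => ?_⟩
  · obtain ⟨S, T, g1, f1, h1, -⟩ := main x hx
    have e : δ⁻¹ • (T - x) + (γ⁻¹ • (S - x) - δ⁻¹ • (T - x)) = γ⁻¹ • (S - x) := by abel
    refine ⟨⟨γ⁻¹ • (S - x), g1.subdiff hg_proper, ?_⟩, ⟨γ⁻¹ • (S - x), g1.subdiff hg_proper, ?_⟩⟩
    · exact Set.mem_add.2 ⟨_, f1.subdiff hf_proper, _, h1.subdiff hh_proper, e⟩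
    · have := sum_subdiff hf_proper hh_proper f1 h1
      rwa [e] at this
  · obtain ⟨_, _, gx, _, _, ex⟩ := main x hx
    obtain ⟨_, _, gy, _, _, ey⟩ := main y hy
    rw [(dc_dom hf_proper hg_proper hh_proper hc gx.1).2.2,
      (dc_dom hf_proper hg_proper hh_proper hc gy.1).2.2, ← ex, ← ey]
end
end
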